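/- Let Q be a cube in ℝⁿ and let {α_R}_{R ∈ D(Q)} be nonnegative numbers. Suppose there exist C > 0 and 0 < δ ≤ 1 such that for every Q' ∈ D(Q): ∑_{R ∈ D(Q')} α_R^δ |R| ≤ C α_{Q'}^δ |Q'|. Then there exists a (1/2)-sparse family F ⊂ D(Q) such that for a.e. x ∈ Q: ∑_{R ∈ D(Q)} α_R χ_R(x) ≲ C^{1/δ} ∑_{P ∈ F} α_P χ_P(x), with implicit constant depending only on n and δ. -/

import Mathlib

open MeasureTheory ENNReal Filter

/-- An axis-parallel cube in `ℝⁿ`, given by its lower-left corner and (positive) side length. -/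
structure DyCube (n : ℕ) where
  corner : Fin n → ℝ
  side : ℝ
  side_pos : 0 < side

namespace DyCube

/-- The set of points of a cube (half-open, so that dyadic children tile it exactly). -/
def set {n : ℕ} (Q : DyCube n) : Set (Fin n → ℝ) :=
  Set.univ.pi fun i => Set.Ico (Q.corner i) (Q.corner i + Q.side)

/-- `P.IsDyadicSub Q` : `P` is a dyadic subcube of `Q`, obtained by `k` successive
dyadic subdivisions of `Q`. -/
def IsDyadicSub {n : ℕ} (P Q : DyCube n) : Prop :=
  ∃ k : ℕ, ∃ m : Fin n → ℕ, (∀ i, m i < 2 ^ k) ∧ P.side = Q.side / 2 ^ k ∧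
    ∀ i, P.corner i = Q.corner i + m i * (Q.side / 2 ^ k)

end DyCube

/-- `Ω_k`, the union of the cubes of the `k`-th generation of a family. -/
def genUnion {n : ℕ} (F : ℕ → Set (DyCube n)) (k : ℕ) : Set (Fin n → ℝ) :=
  ⋃ P ∈ F k, P.set

/-- A contracting family of dyadic subcubes of `Q`: generations `F k` of pairwise disjoint
dyadic subcubes, starting from `F 0 = {Q}`, with decreasing unions whose measures tend to `0`. -/
structure ContractingFamily {n : ℕ} (Q : DyCube n) (F : ℕ → Set (DyCube n)) : Prop where
  zero : F 0 = {Q}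
  dyadic : ∀ k, ∀ P ∈ F k, P.IsDyadicSub Q
  disj : ∀ k, (F k).PairwiseDisjoint DyCube.set
  nested : ∀ k, genUnion F (k + 1) ⊆ genUnion F k
  vanish : Tendsto (fun k => volume (genUnion F k)) atTop (nhds 0)

/-- An `η`-sparse family: a contracting family such that each cube `P ∈ F k` satisfies
`|E_P| ≥ η |P|`, where `E_P = P \ Ω_{k+1}`. -/
def IsSparseFamily {n : ℕ} (η : ℝ) (Q : DyCube n) (F : ℕ → Set (DyCube n)) : Prop :=
  ContractingFamily Q F ∧
    ∀ k, ∀ P ∈ F k, ENNReal.ofReal η * volume P.set ≤ volume (P.set \ genUnion F (k + 1))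

/-!
The dyadic cubes of `D(Q)` containing a point `x` form a sequence `R₀ ⊇ R₁ ⊇ ⋯`, one per level.
Along it, start at `R₀ = Q`, and from a selected cube `P` select next the first cube `R` with
`∑_{R ⊆ S ⊆ P} α_S ^ δ > K α_P ^ δ`. Between two selections this sum is at most `K α_P ^ δ`, so by
subadditivity of `t ↦ t ^ δ` the corresponding sum of the `α_S` is at most `K ^ (1 / δ) α_P`; adding
the blocks gives the domination at every point. Whether a cube is selected depends on its ancestors
only, so the cubes of each generation are disjoint. A point of `P` lying in the next generation
satisfies `∑_{R ∈ D(P)} α_R ^ δ χ_R > K α_P ^ δ`, and by Markov's inequality and the packing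
condition such points fill at most the fraction `C / K` of `P`; for `η`-sparseness take
`K = C / (1 - η)`.
-/

section StoppingTimes

variable {K : ℝ≥0∞} {u v : ℕ → ℝ≥0∞} {i j k : ℕ}

/-- The stopping rule: `j` is the first index at which the partial sum of `u` started at `i`
exceeds `K * u i`. -/
def IsNextStop (K : ℝ≥0∞) (u : ℕ → ℝ≥0∞) (i j : ℕ) : Prop :=
  IsLeast {l | i ≤ l ∧ K * u i < ∑ m ∈ Finset.Ico i (l + 1), u m} j

/-- `j` is the `k`-th stopping time of `u`, where `0` is the zeroth one and each later one arises
from its predecessor by the rule `IsNextStop`. This is a relation and not a function because the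
process may terminate. -/
def IsStop (K : ℝ≥0∞) (u : ℕ → ℝ≥0∞) : ℕ → ℕ → Prop
  | 0, j => j = 0
  | k + 1, j => ∃ i, IsStop K u k i ∧ IsNextStop K u i j

theorem IsNextStop.congr (h : IsNextStop K u i j) (huv : ∀ l ≤ j, u l = v l) :
    IsNextStop K v i j := by
  have exceeds_iff (l : ℕ) (hl : l ≤ j) : K * u i < ∑ m ∈ Finset.Ico i (l + 1), u m ↔
      K * v i < ∑ m ∈ Finset.Ico i (l + 1), v m := by
    rw [huv i h.1.1, Finset.sum_congr rfl fun m hm => huv m (by grind)]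
  refine ⟨⟨h.1.1, (exceeds_iff j le_rfl).1 h.1.2⟩, fun l hl => ?_⟩
  by_contra! hlj
  exact hlj.not_ge (h.2 ⟨hl.1, (exceeds_iff l hlj.le).2 hl.2⟩)

theorem IsNextStop.lt (h : IsNextStop K u i j) (hu : u i ≤ K * u i) : i < j := by
  refine h.1.1.lt_of_ne ?_
  rintro rfl
  exact hu.not_gt (by simpa using h.1.2)

theorem IsNextStop.sum_Ico_le (h : IsNextStop K u i j) :
    ∑ m ∈ Finset.Ico i j, u m ≤ K * u i := by
  rcases h.1.1.eq_or_lt with rfl | hij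
  · simp
  · by_contra! hlt
    have hle : j ≤ j - 1 := h.2 ⟨by omega, by rwa [Nat.sub_add_cancel (by omega)]⟩
    omega

theorem exists_isNextStop_lt (h : K * u i < ∑ m ∈ Finset.Ico i k, u m) :
    ∃ j < k, IsNextStop K u i j := by
  have hik : i < k := by
    by_contra! hki
    simp [Finset.Ico_eq_empty_of_le hki] at h
  have hmem : k - 1 ∈ {l | i ≤ l ∧ K * u i < ∑ m ∈ Finset.Ico i (l + 1), u m} :=
    ⟨by omega, by rwa [Nat.sub_add_cancel (by omega)]⟩
  exact ⟨_, (Nat.sInf_le hmem).trans_lt (by omega), Nat.sInf_mem ⟨_, hmem⟩,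
    fun _ hl => Nat.sInf_le hl⟩

theorem IsStop.congr (h : IsStop K u k j) (huv : ∀ l ≤ j, u l = v l) : IsStop K v k j := by
  induction k generalizing j with
  | zero => exact h
  | succ k ih =>
    obtain ⟨i, hi, hij⟩ := h
    exact ⟨i, ih hi fun l hl => huv l (hl.trans hij.1.1), hij.congr huv⟩

theorem IsStop.unique {j' : ℕ} (h : IsStop K u k j) (h' : IsStop K u k j') : j = j' := by
  induction k generalizing j j' with
  | zero => exact h.trans h'.symm
  | succ k ih =>
    obtain ⟨i, hi, hij⟩ := h
    obtain ⟨i', hi', hij'⟩ := h'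
    obtain rfl := ih hi hi'
    exact IsLeast.unique hij hij'

end StoppingTimes

section Domination

variable {δ : ℝ} {K : ℝ≥0∞} {b w : ℕ → ℝ≥0∞}

theorem rpow_sum_le_sum_rpow {ι : Type*} (hδ0 : 0 < δ) (hδ1 : δ ≤ 1) (f : ι → ℝ≥0∞)
    (s : Finset ι) : (∑ l ∈ s, f l) ^ δ ≤ ∑ l ∈ s, f l ^ δ :=
  Finset.le_sum_of_subadditive (· ^ δ) (ENNReal.zero_rpow_of_pos hδ0).le
    (fun x y => ENNReal.rpow_add_le_add_rpow x y hδ0.le hδ1) s f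

theorem sum_le_of_sum_rpow_le {ι : Type*} (hδ0 : 0 < δ) (hδ1 : δ ≤ 1) {f : ι → ℝ≥0∞}
    {s : Finset ι} {B : ℝ≥0∞} (h : ∑ l ∈ s, f l ^ δ ≤ K * B ^ δ) :
    ∑ l ∈ s, f l ≤ K ^ (1 / δ) * B := by
  rw [← ENNReal.rpow_le_rpow_iff hδ0, ENNReal.mul_rpow_of_nonneg _ _ hδ0.le, ← ENNReal.rpow_mul,
    one_div_mul_cancel hδ0.ne', ENNReal.rpow_one]
  exact (rpow_sum_le_sum_rpow hδ0 hδ1 f s).trans h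

theorem sum_Ico_le_of_isStop (hδ0 : 0 < δ) (hδ1 : δ ≤ 1) (hK : ∀ l, b l ^ δ ≤ K * b l ^ δ)
    (hw : ∀ k j, IsStop K (fun l => b l ^ δ) k j → b j ≤ w k) {i k : ℕ} (N : ℕ)
    (hi : IsStop K (fun l => b l ^ δ) k i) :
    ∑ l ∈ Finset.Ico i N, b l ≤ K ^ (1 / δ) * ∑' m, w (m + k) := by
  have block_le {j : ℕ} (h : ∑ l ∈ Finset.Ico i j, b l ^ δ ≤ K * b i ^ δ) :
      ∑ l ∈ Finset.Ico i j, b l ≤ K ^ (1 / δ) * w k :=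
    (sum_le_of_sum_rpow_le hδ0 hδ1 h).trans (by gcongr; exact hw k i hi)
  have tsum_split : ∑' m, w (m + k) = w k + ∑' m, w (m + (k + 1)) := by
    rw [tsum_eq_zero_add' ENNReal.summable]
    simp only [zero_add, add_assoc, add_comm 1 k]
  rw [tsum_split, mul_add]
  by_cases hnext : ∃ j < N, IsNextStop K (fun l => b l ^ δ) i j
  · obtain ⟨j, hjN, hj⟩ := hnext
    have hij : i < j := hj.lt (hK i)
    rw [← Finset.sum_Ico_consecutive _ hij.le hjN.le]
    exact add_le_add (block_le hj.sum_Ico_le) (sum_Ico_le_of_isStop hδ0 hδ1 hK hw N ⟨i, hi, hj⟩)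
  · exact (block_le (not_lt.1 fun h => hnext (exists_isNextStop_lt h))).trans le_self_add
termination_by N - i

theorem tsum_le_of_isStop (hδ0 : 0 < δ) (hδ1 : δ ≤ 1) (hK : ∀ l, b l ^ δ ≤ K * b l ^ δ)
    (hw : ∀ k j, IsStop K (fun l => b l ^ δ) k j → b j ≤ w k) :
    ∑' l, b l ≤ K ^ (1 / δ) * ∑' k, w k := by
  rw [ENNReal.tsum_eq_iSup_nat]
  refine iSup_le fun N => ?_
  simpa using sum_Ico_le_of_isStop hδ0 hδ1 hK hw (i := 0) (k := 0) N rfl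

end Domination

attribute [ext] DyCube

namespace DyCube

variable {n : ℕ} {P Q : DyCube n} {x y : Fin n → ℝ} {k l : ℕ} {m : Fin n → ℕ}

theorem mem_set : x ∈ Q.set ↔ ∀ i, Q.corner i ≤ x i ∧ x i < Q.corner i + Q.side := by
  simp [set, Set.mem_pi]

theorem corner_mem_set (Q : DyCube n) : Q.corner ∈ Q.set :=
  mem_set.2 fun _ => ⟨le_rfl, lt_add_of_pos_right _ Q.side_pos⟩

theorem measurableSet_set (Q : DyCube n) : MeasurableSet Q.set :=
  MeasurableSet.univ_pi fun _ => measurableSet_Ico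

theorem volume_set (Q : DyCube n) : volume Q.set = ENNReal.ofReal Q.side ^ n := by
  rw [set, Real.volume_pi_Ico]; simp

theorem volume_set_ne_zero (Q : DyCube n) : volume Q.set ≠ 0 := by
  rw [volume_set]; exact pow_ne_zero _ (by simpa using Q.side_pos)

theorem volume_set_ne_top (Q : DyCube n) : volume Q.set ≠ ∞ := by
  rw [volume_set]; exact ENNReal.pow_ne_top ENNReal.ofReal_ne_top

/-- The cube with index `m` in the grid of cubes of side `Q.side / 2 ^ k` anchored at the corner of
`Q`. It lies in `Q` exactly when all `m i < 2 ^ k`; larger indices are allowed. -/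
noncomputable def gridCube (Q : DyCube n) (k : ℕ) (m : Fin n → ℕ) : DyCube n where
  corner i := Q.corner i + m i * (Q.side / 2 ^ k)
  side := Q.side / 2 ^ k
  side_pos := div_pos Q.side_pos (by positivity)

/-- The index of the level-`k` grid cube containing `x`; meaningful only if `Q.corner ≤ x`, because
the natural-number floor truncates at `0`. -/
noncomputable def gridIndex (Q : DyCube n) (k : ℕ) (x : Fin n → ℝ) : Fin n → ℕ :=
  fun i => ⌊(x i - Q.corner i) / (Q.side / 2 ^ k)⌋₊

/-- The dyadic subcube of `Q` of level `k` that contains `x`, for `x ∈ Q.set`. -/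
noncomputable def subcubeAt (Q : DyCube n) (k : ℕ) (x : Fin n → ℝ) : DyCube n :=
  Q.gridCube k (Q.gridIndex k x)

theorem isDyadicSub_iff_exists_gridCube :
    P.IsDyadicSub Q ↔ ∃ k m, (∀ i, m i < 2 ^ k) ∧ P = Q.gridCube k m := by
  simp only [IsDyadicSub, gridCube, DyCube.ext_iff, funext_iff, and_comm]

theorem gridCube_zero (Q : DyCube n) : Q.gridCube 0 0 = Q := by
  simp [gridCube]

theorem gridCube_gridCube (Q : DyCube n) (k l : ℕ) (m m' : Fin n → ℕ) :
    (Q.gridCube k m).gridCube l m' = Q.gridCube (k + l) fun i => 2 ^ l * m i + m' i := by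
  ext i
  · simp only [gridCube]
    push_cast
    rw [pow_add]
    field_simp
    ring
  · simp only [gridCube, pow_add, div_div]

theorem level_eq_of_gridCube_eq {m' : Fin n → ℕ} (h : Q.gridCube k m = Q.gridCube l m') :
    k = l := by
  have hside : Q.side / 2 ^ k = Q.side / 2 ^ l := congrArg side h
  have hpow : (2 : ℝ) ^ k = 2 ^ l :=
    inv_injective (mul_left_cancel₀ Q.side_pos.ne' (by simpa only [div_eq_mul_inv] using hside))
  exact pow_right_injective₀ two_pos (by norm_num) hpow

theorem mem_gridCube_iff (hx : x ∈ Q.set) : x ∈ (Q.gridCube k m).set ↔ Q.gridIndex k x = m := by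
  have hside : 0 < Q.side / 2 ^ k := (Q.gridCube k m).side_pos
  rw [mem_set, funext_iff]
  refine forall_congr' fun i => ?_
  have hquot : 0 ≤ (x i - Q.corner i) / (Q.side / 2 ^ k) :=
    div_nonneg (sub_nonneg.2 (mem_set.1 hx i).1) hside.le
  rw [gridIndex, Nat.floor_eq_iff hquot, le_div_iff₀ hside, div_lt_iff₀ hside, gridCube]
  grind

theorem gridIndex_lt (hx : x ∈ Q.set) (k : ℕ) (i : Fin n) : Q.gridIndex k x i < 2 ^ k := by
  have hside := Q.side_pos
  obtain ⟨hle, hlt⟩ := mem_set.1 hx i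
  rw [gridIndex, Nat.floor_lt (div_nonneg (by linarith) (by positivity)),
    div_lt_iff₀ (by positivity)]
  push_cast
  rw [mul_div_cancel₀ _ (by positivity)]
  linarith

theorem IsDyadicSub.refl (Q : DyCube n) : Q.IsDyadicSub Q :=
  isDyadicSub_iff_exists_gridCube.2 ⟨0, 0, by simp, Q.gridCube_zero.symm⟩

theorem IsDyadicSub.set_subset (h : P.IsDyadicSub Q) : P.set ⊆ Q.set := by
  obtain ⟨k, m, hm, rfl⟩ := isDyadicSub_iff_exists_gridCube.1 h
  have hside : 0 < Q.side / 2 ^ k := (Q.gridCube k m).side_pos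
  refine fun x hx => mem_set.2 fun i => ?_
  obtain ⟨hle, hlt⟩ := mem_set.1 hx i
  simp only [gridCube] at hle hlt
  have hindex : ((m i : ℝ) + 1) * (Q.side / 2 ^ k) ≤ Q.side :=
    calc ((m i : ℝ) + 1) * (Q.side / 2 ^ k) ≤ 2 ^ k * (Q.side / 2 ^ k) := by
          gcongr; exact_mod_cast hm i
      _ = Q.side := mul_div_cancel₀ _ (by positivity)
  have hshift : 0 ≤ (m i : ℝ) * (Q.side / 2 ^ k) := by positivity
  constructor <;> linarith

theorem countable_isDyadicSub (Q : DyCube n) : {P : DyCube n | P.IsDyadicSub Q}.Countable := by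
  refine (Set.countable_range fun p : ℕ × (Fin n → ℕ) => Q.gridCube p.1 p.2).mono fun P hP => ?_
  obtain ⟨k, m, -, rfl⟩ := isDyadicSub_iff_exists_gridCube.1 hP
  exact ⟨(k, m), rfl⟩

theorem mem_subcubeAt (hx : x ∈ Q.set) (k : ℕ) : x ∈ (Q.subcubeAt k x).set :=
  (mem_gridCube_iff hx).2 rfl

theorem subcubeAt_isDyadicSub (hx : x ∈ Q.set) (k : ℕ) : (Q.subcubeAt k x).IsDyadicSub Q :=
  isDyadicSub_iff_exists_gridCube.2 ⟨k, _, gridIndex_lt hx k, rfl⟩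

theorem subcubeAt_injective (Q : DyCube n) (x : Fin n → ℝ) :
    Function.Injective fun k => Q.subcubeAt k x :=
  fun _ _ h => level_eq_of_gridCube_eq h

theorem gridCube_eq_subcubeAt (hx : x ∈ Q.set) (h : x ∈ (Q.gridCube k m).set) :
    Q.gridCube k m = Q.subcubeAt k x := by
  rw [subcubeAt, (mem_gridCube_iff hx).1 h]

theorem IsDyadicSub.exists_eq_subcubeAt (h : P.IsDyadicSub Q) (hx : x ∈ P.set) :
    ∃ k, P = Q.subcubeAt k x := by
  have hxQ := h.set_subset hx
  obtain ⟨k, m, -, rfl⟩ := isDyadicSub_iff_exists_gridCube.1 h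
  exact ⟨k, gridCube_eq_subcubeAt hxQ hx⟩

theorem subcubeAt_zero (hx : x ∈ Q.set) : Q.subcubeAt 0 x = Q := by
  rw [← gridCube_eq_subcubeAt (m := 0) hx (by rwa [gridCube_zero]), gridCube_zero]

theorem subcubeAt_subcubeAt (hx : x ∈ Q.set) (k l : ℕ) :
    (Q.subcubeAt k x).subcubeAt l x = Q.subcubeAt (k + l) x := by
  have hmem : x ∈ ((Q.subcubeAt k x).subcubeAt l x).set := mem_subcubeAt (mem_subcubeAt hx k) l
  simp only [subcubeAt, gridCube_gridCube] at hmem ⊢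
  exact gridCube_eq_subcubeAt hx hmem

theorem subcubeAt_eq_of_mem (hx : x ∈ Q.set) (hy : y ∈ (Q.subcubeAt k x).set) (hl : l ≤ k) :
    Q.subcubeAt l y = Q.subcubeAt l x := by
  obtain ⟨d, rfl⟩ := Nat.exists_eq_add_of_le hl
  have hyQ : y ∈ Q.set := (subcubeAt_isDyadicSub hx _).set_subset hy
  rw [← subcubeAt_subcubeAt hx] at hy
  exact (gridCube_eq_subcubeAt hyQ
    ((subcubeAt_isDyadicSub (mem_subcubeAt hx l) d).set_subset hy)).symm

/-- The function `∑_{R ∈ D(P)} φ_R χ_R`. -/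
noncomputable def dyadicSum (φ : DyCube n → ℝ≥0∞) (P : DyCube n) (x : Fin n → ℝ) : ℝ≥0∞ :=
  ∑' R : {R : DyCube n // R.IsDyadicSub P}, (R : DyCube n).set.indicator (fun _ => φ R) x

variable (φ : DyCube n → ℝ≥0∞)

theorem measurable_dyadicSum (P : DyCube n) : Measurable (dyadicSum φ P) :=
  have : Countable {R : DyCube n // R.IsDyadicSub P} := P.countable_isDyadicSub.to_subtype
  Measurable.tsum fun R => measurable_const.indicator R.1.measurableSet_set

theorem lintegral_dyadicSum (P : DyCube n) : ∫⁻ x, dyadicSum φ P x =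
    ∑' R : {R : DyCube n // R.IsDyadicSub P}, φ R * volume (R : DyCube n).set := by
  have : Countable {R : DyCube n // R.IsDyadicSub P} := P.countable_isDyadicSub.to_subtype
  simp only [dyadicSum]
  rw [lintegral_tsum fun R => (measurable_const.indicator R.1.measurableSet_set).aemeasurable]
  exact tsum_congr fun R => lintegral_indicator_const R.1.measurableSet_set _

theorem dyadicSum_eq_tsum_subcubeAt (hx : x ∈ P.set) :
    dyadicSum φ P x = ∑' k, φ (P.subcubeAt k x) := by
  let chain (k : ℕ) : {R : DyCube n // R.IsDyadicSub P} :=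
    ⟨P.subcubeAt k x, subcubeAt_isDyadicSub hx k⟩
  have chain_injective : Function.Injective chain := fun k l h =>
    P.subcubeAt_injective x (congrArg Subtype.val h)
  rw [dyadicSum, ← chain_injective.tsum_eq]
  · exact tsum_congr fun k => Set.indicator_of_mem (mem_subcubeAt hx k) _
  · intro R hR
    obtain ⟨k, hk⟩ := R.2.exists_eq_subcubeAt (Set.mem_of_indicator_ne_zero hR)
    exact ⟨k, Subtype.ext hk.symm⟩

variable {φ}

theorem dyadicSum_eq_zero_of_tsum_eq_zero
    (h : ∑' R : {R : DyCube n // R.IsDyadicSub P}, φ R * volume (R : DyCube n).set = 0)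
    (x : Fin n → ℝ) : dyadicSum φ P x = 0 := by
  have hφ (R : {R : DyCube n // R.IsDyadicSub P}) : φ R = 0 :=
    (mul_eq_zero.1 (ENNReal.tsum_eq_zero.1 h R)).resolve_right R.1.volume_set_ne_zero
  simp [dyadicSum, hφ]

theorem le_mul_of_packing {C : ℝ≥0∞}
    (hpack : ∑' R : {R : DyCube n // R.IsDyadicSub P}, φ R * volume (R : DyCube n).set ≤
      C * φ P * volume P.set) : φ P ≤ C * φ P := by
  have hself := ENNReal.le_tsum (f := fun R : {R : DyCube n // R.IsDyadicSub P} =>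
    φ R * volume (R : DyCube n).set) ⟨P, .refl P⟩
  exact (ENNReal.mul_le_mul_iff_left P.volume_set_ne_zero P.volume_set_ne_top).1 (hself.trans hpack)

end DyCube

section GeneralFamilies

variable {n : ℕ} {Q : DyCube n} {F : ℕ → Set (DyCube n)} {k : ℕ} {t : ℝ≥0∞}

theorem measurableSet_genUnion (hF : ∀ P ∈ F k, P.IsDyadicSub Q) :
    MeasurableSet (genUnion F k) :=
  .biUnion (Q.countable_isDyadicSub.mono hF) fun P _ => P.measurableSet_set

theorem volume_genUnion_succ_le (hF : ∀ P ∈ F k, P.IsDyadicSub Q)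
    (hdisj : (F k).PairwiseDisjoint DyCube.set) (hnested : genUnion F (k + 1) ⊆ genUnion F k)
    (hsmall : ∀ P ∈ F k, volume (P.set ∩ genUnion F (k + 1)) ≤ t * volume P.set) :
    volume (genUnion F (k + 1)) ≤ t * volume (genUnion F k) := by
  have hcount : (F k).Countable := Q.countable_isDyadicSub.mono hF
  have hcover : genUnion F (k + 1) = ⋃ P ∈ F k, P.set ∩ genUnion F (k + 1) := by
    rw [← Set.iUnion₂_inter]
    exact (Set.inter_eq_right.2 hnested).symm
  calc volume (genUnion F (k + 1))
      ≤ ∑' P : F k, volume ((P : DyCube n).set ∩ genUnion F (k + 1)) := by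
        conv_lhs => rw [hcover]
        exact measure_biUnion_le volume hcount _
    _ ≤ ∑' P : F k, t * volume (P : DyCube n).set := ENNReal.tsum_le_tsum fun P => hsmall P P.2
    _ = t * volume (genUnion F k) := by
        rw [ENNReal.tsum_mul_left, genUnion,
          measure_biUnion hcount hdisj fun P _ => P.measurableSet_set]

theorem tendsto_volume_genUnion (h0 : F 0 = {Q}) (ht : t < 1)
    (hstep : ∀ k, volume (genUnion F (k + 1)) ≤ t * volume (genUnion F k)) :
    Tendsto (fun k => volume (genUnion F k)) atTop (nhds 0) := by
  have hgeom (k : ℕ) : volume (genUnion F k) ≤ t ^ k * volume Q.set := by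
    induction k with
    | zero => simp [genUnion, h0]
    | succ k ih =>
      calc volume (genUnion F (k + 1)) ≤ t * (t ^ k * volume Q.set) := (hstep k).trans (by gcongr)
        _ = t ^ (k + 1) * volume Q.set := by rw [pow_succ']; ring
  have hlim := ENNReal.Tendsto.mul_const (ENNReal.tendsto_pow_atTop_nhds_zero_of_lt_one ht)
    (Or.inr Q.volume_set_ne_top)
  rw [zero_mul] at hlim
  exact tendsto_of_tendsto_of_tendsto_of_le_of_le tendsto_const_nhds hlim (fun _ => zero_le) hgeom

theorem isSparseFamily_of_volume_inter_le {η : ℝ} (hη0 : 0 < η) (hη1 : η ≤ 1) (h0 : F 0 = {Q})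
    (hF : ∀ k, ∀ P ∈ F k, P.IsDyadicSub Q) (hdisj : ∀ k, (F k).PairwiseDisjoint DyCube.set)
    (hnested : ∀ k, genUnion F (k + 1) ⊆ genUnion F k)
    (hsmall : ∀ k, ∀ P ∈ F k,
      volume (P.set ∩ genUnion F (k + 1)) ≤ ENNReal.ofReal (1 - η) * volume P.set) :
    IsSparseFamily η Q F := by
  refine ⟨⟨h0, hF, hdisj, hnested, tendsto_volume_genUnion h0 (t := ENNReal.ofReal (1 - η))
    (by simpa using hη0)
    fun k => volume_genUnion_succ_le (hF k) (hdisj k) (hnested k) (hsmall k)⟩, fun k P hP => ?_⟩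
  have hfinite : volume (P.set ∩ genUnion F (k + 1)) ≠ ∞ :=
    measure_ne_top_of_subset Set.inter_subset_left P.volume_set_ne_top
  refine (ENNReal.add_le_add_iff_left hfinite).1 ?_
  calc volume (P.set ∩ genUnion F (k + 1)) + ENNReal.ofReal η * volume P.set
      ≤ ENNReal.ofReal (1 - η) * volume P.set + ENNReal.ofReal η * volume P.set := by
        gcongr; exact hsmall k P hP
    _ = volume P.set := by
        rw [← add_mul, ← ENNReal.ofReal_add (sub_nonneg.2 hη1) hη0.le]; simp
    _ = volume (P.set ∩ genUnion F (k + 1)) + volume (P.set \ genUnion F (k + 1)) :=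
        (measure_inter_add_sdiff _ (measurableSet_genUnion (hF (k + 1)))).symm

end GeneralFamilies

section StoppingFamily

variable {n : ℕ} {K : ℝ≥0∞} {φ : DyCube n → ℝ≥0∞} {P Q : DyCube n} {x : Fin n → ℝ} {k : ℕ}

/-- The `k`-th generation of stopping cubes in `Q`: along the chain of dyadic subcubes containing a
given point, these are the cubes selected by the `k`-th stopping time of the values of `φ`. -/
def stoppingFamily (K : ℝ≥0∞) (φ : DyCube n → ℝ≥0∞) (Q : DyCube n) (k : ℕ) : Set (DyCube n) :=
  {P | ∃ x ∈ Q.set, ∃ j, IsStop K (fun l => φ (Q.subcubeAt l x)) k j ∧ P = Q.subcubeAt j x}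

theorem isDyadicSub_of_mem_stoppingFamily (hP : P ∈ stoppingFamily K φ Q k) :
    P.IsDyadicSub Q := by
  obtain ⟨x, hx, j, -, rfl⟩ := hP
  exact DyCube.subcubeAt_isDyadicSub hx j

theorem exists_isStop_of_mem_stoppingFamily (hP : P ∈ stoppingFamily K φ Q k) (hx : x ∈ P.set) :
    ∃ j, IsStop K (fun l => φ (Q.subcubeAt l x)) k j ∧ P = Q.subcubeAt j x := by
  obtain ⟨y, hy, j, hj, rfl⟩ := hP
  have hchain (l : ℕ) (hl : l ≤ j) := DyCube.subcubeAt_eq_of_mem hy hx hl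
  exact ⟨j, hj.congr fun l hl => by rw [hchain l hl], (hchain j le_rfl).symm⟩

theorem mem_genUnion_stoppingFamily :
    x ∈ genUnion (stoppingFamily K φ Q) k ↔
      x ∈ Q.set ∧ ∃ j, IsStop K (fun l => φ (Q.subcubeAt l x)) k j := by
  simp only [genUnion, Set.mem_iUnion, exists_prop]
  constructor
  · rintro ⟨P, hP, hx⟩
    obtain ⟨j, hj, -⟩ := exists_isStop_of_mem_stoppingFamily hP hx
    exact ⟨(isDyadicSub_of_mem_stoppingFamily hP).set_subset hx, j, hj⟩
  · rintro ⟨hx, j, hj⟩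
    exact ⟨Q.subcubeAt j x, ⟨x, hx, j, hj, rfl⟩, DyCube.mem_subcubeAt hx j⟩

variable (K φ Q k)

theorem stoppingFamily_zero : stoppingFamily K φ Q 0 = {Q} := by
  ext P
  simp only [stoppingFamily, IsStop, Set.mem_ofPred_eq, exists_eq_left, Set.mem_singleton_iff]
  constructor
  · rintro ⟨x, hx, rfl⟩
    exact DyCube.subcubeAt_zero hx
  · rintro rfl
    exact ⟨P.corner, P.corner_mem_set, (DyCube.subcubeAt_zero P.corner_mem_set).symm⟩

theorem pairwiseDisjoint_stoppingFamily :
    (stoppingFamily K φ Q k).PairwiseDisjoint DyCube.set := by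
  refine fun P hP R hR hne => Set.disjoint_left.2 fun x hxP hxR => hne ?_
  obtain ⟨j, hj, rfl⟩ := exists_isStop_of_mem_stoppingFamily hP hxP
  obtain ⟨j', hj', rfl⟩ := exists_isStop_of_mem_stoppingFamily hR hxR
  rw [hj.unique hj']

theorem genUnion_stoppingFamily_succ_subset :
    genUnion (stoppingFamily K φ Q) (k + 1) ⊆ genUnion (stoppingFamily K φ Q) k := by
  intro x hx
  obtain ⟨hxQ, -, i, hi, -⟩ := mem_genUnion_stoppingFamily.1 hx
  exact mem_genUnion_stoppingFamily.2 ⟨hxQ, i, hi⟩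

variable {K φ Q k}

theorem mul_lt_dyadicSum_of_mem_genUnion_succ (hP : P ∈ stoppingFamily K φ Q k)
    (hxP : x ∈ P.set) (hx : x ∈ genUnion (stoppingFamily K φ Q) (k + 1)) :
    K * φ P < DyCube.dyadicSum φ P x := by
  obtain ⟨i, hi, rfl⟩ := exists_isStop_of_mem_stoppingFamily hP hxP
  obtain ⟨hxQ, j, i', hi', hij⟩ := mem_genUnion_stoppingFamily.1 hx
  obtain rfl := hi.unique hi'
  calc K * φ (Q.subcubeAt i x)
      < ∑ l ∈ Finset.Ico i (j + 1), φ (Q.subcubeAt l x) := hij.1.2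
    _ = ∑ l ∈ Finset.range (j + 1 - i), φ (Q.subcubeAt (i + l) x) :=
        Finset.sum_Ico_eq_sum_range _ _ _
    _ ≤ ∑' l, φ (Q.subcubeAt (i + l) x) := ENNReal.sum_le_tsum _
    _ = DyCube.dyadicSum φ (Q.subcubeAt i x) x := by
        simp only [DyCube.dyadicSum_eq_tsum_subcubeAt φ hxP, DyCube.subcubeAt_subcubeAt hxQ]

theorem volume_inter_genUnion_stoppingFamily_succ_le {t : ℝ≥0∞}
    (hP : P ∈ stoppingFamily K φ Q k)
    (hpack : ∑' R : {R : DyCube n // R.IsDyadicSub P}, φ R * volume (R : DyCube n).set ≤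
      t * K * φ P * volume P.set) :
    volume (P.set ∩ genUnion (stoppingFamily K φ Q) (k + 1)) ≤ t * volume P.set := by
  have hlt (x : Fin n → ℝ) (hx : x ∈ P.set ∩ genUnion (stoppingFamily K φ Q) (k + 1)) :
      K * φ P < DyCube.dyadicSum φ P x := mul_lt_dyadicSum_of_mem_genUnion_succ hP hx.1 hx.2
  rcases (P.set ∩ genUnion (stoppingFamily K φ Q) (k + 1)).eq_empty_or_nonempty with
    hempty | ⟨z, hz⟩
  · simp [hempty]
  have htop : K * φ P ≠ ∞ := (hlt z hz).ne_top
  have hzero : K * φ P ≠ 0 := fun h => by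
    rw [mul_assoc t, h, mul_zero, zero_mul, nonpos_iff_eq_zero] at hpack
    have hsum := DyCube.dyadicSum_eq_zero_of_tsum_eq_zero hpack z
    exact ENNReal.not_lt_zero ((hlt z hz).trans_eq hsum)
  refine (ENNReal.mul_le_mul_iff_right hzero htop).1 ?_
  calc K * φ P * volume (P.set ∩ genUnion (stoppingFamily K φ Q) (k + 1))
      ≤ K * φ P * volume {x | K * φ P ≤ DyCube.dyadicSum φ P x} := by
        gcongr
        exact fun x hx => (hlt x hx).le
    _ ≤ ∫⁻ x, DyCube.dyadicSum φ P x :=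
        mul_meas_ge_le_lintegral (DyCube.measurable_dyadicSum φ P) _
    _ ≤ t * K * φ P * volume P.set := (DyCube.lintegral_dyadicSum φ P).trans_le hpack
    _ = K * φ P * (t * volume P.set) := by ring

theorem dyadicSum_le_tsum_stoppingFamily {δ : ℝ} (hδ0 : 0 < δ) (hδ1 : δ ≤ 1)
    (α : DyCube n → ℝ≥0∞) (hK : ∀ P : DyCube n, P.IsDyadicSub Q → α P ^ δ ≤ K * α P ^ δ)
    (hx : x ∈ Q.set) :
    DyCube.dyadicSum α Q x ≤ K ^ (1 / δ) *
      ∑' k : ℕ, ∑' P : stoppingFamily K (fun R => α R ^ δ) Q k,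
        (P : DyCube n).set.indicator (fun _ => α P) x := by
  rw [DyCube.dyadicSum_eq_tsum_subcubeAt α hx]
  refine tsum_le_of_isStop hδ0 hδ1 (fun l => hK _ (DyCube.subcubeAt_isDyadicSub hx l))
    fun k j hj => ?_
  calc α (Q.subcubeAt j x)
      = (Q.subcubeAt j x).set.indicator (fun _ => α (Q.subcubeAt j x)) x :=
        (Set.indicator_of_mem (DyCube.mem_subcubeAt hx j) fun _ => α (Q.subcubeAt j x)).symm
    _ ≤ _ := ENNReal.le_tsum (f := fun P : stoppingFamily K (fun R => α R ^ δ) Q k =>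
        (P : DyCube n).set.indicator (fun _ => α P) x) ⟨Q.subcubeAt j x, x, hx, j, hj, rfl⟩

end StoppingFamily

theorem stmt5_general {n : ℕ} {δ η : ℝ} (hδ0 : 0 < δ) (hδ1 : δ ≤ 1) (hη0 : 0 < η) (hη1 : η < 1)
    (Q : DyCube n) (α : DyCube n → ℝ≥0∞) (C : ℝ≥0∞)
    (hpack : ∀ Q' : DyCube n, Q'.IsDyadicSub Q →
      ∑' R : {R : DyCube n // R.IsDyadicSub Q'},
        α (R : DyCube n) ^ δ * volume (R : DyCube n).set ≤ C * α Q' ^ δ * volume Q'.set) :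
    ∃ F : ℕ → Set (DyCube n), IsSparseFamily η Q F ∧ ∀ x ∈ Q.set,
      ∑' R : {R : DyCube n // R.IsDyadicSub Q},
          (R : DyCube n).set.indicator (fun _ => α (R : DyCube n)) x ≤
        (C / ENNReal.ofReal (1 - η)) ^ (1 / δ) *
          ∑' k : ℕ, ∑' P : F k, (P : DyCube n).set.indicator (fun _ => α (P : DyCube n)) x := by
  set t := ENNReal.ofReal (1 - η) with ht
  have htK : t * (C / t) = C := ENNReal.mul_div_cancel (by simpa [ht] using hη1) (by simp [ht])
  have hCK : C ≤ C / t := by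
    rw [ENNReal.div_eq_inv_mul]
    exact le_mul_of_one_le_left' (ENNReal.one_le_inv.2 (by simpa [ht] using hη0.le))
  refine ⟨stoppingFamily (C / t) (fun R => α R ^ δ) Q, ?_, fun x hx => ?_⟩
  · refine isSparseFamily_of_volume_inter_le hη0 hη1.le (stoppingFamily_zero _ _ _)
      (fun k P hP => isDyadicSub_of_mem_stoppingFamily hP)
      (pairwiseDisjoint_stoppingFamily _ _ _) (genUnion_stoppingFamily_succ_subset _ _ _)
      fun k P hP => volume_inter_genUnion_stoppingFamily_succ_le hP ?_
    rw [htK]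
    exact hpack P (isDyadicSub_of_mem_stoppingFamily hP)
  · exact dyadicSum_le_tsum_stoppingFamily hδ0 hδ1 α
      (fun P hP => (DyCube.le_mul_of_packing (φ := fun R => α R ^ δ) (hpack P hP)).trans
        (by gcongr)) hx

/-- Sparse domination for dyadic sums: if `∑_{R ∈ D(Q')} α_R^δ |R| ≤ C α_{Q'}^δ |Q'|` for every
dyadic subcube `Q'` of `Q`, then there is a `(1/2)`-sparse family `F ⊆ D(Q)` with
`∑_{R ∈ D(Q)} α_R χ_R ≲ C^{1/δ} ∑_{P ∈ F} α_P χ_P` a.e. on `Q`, the implicit constant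
depending only on `n` and `δ`. -/
theorem stmt5 {n : ℕ} (δ : ℝ) (hδ0 : 0 < δ) (hδ1 : δ ≤ 1) :
    ∃ c : ℝ, 0 < c ∧
      ∀ (Q : DyCube n) (a : DyCube n → ℝ), (∀ R, 0 ≤ a R) → ∀ C : ℝ, 0 < C →
        (∀ Q' : DyCube n, Q'.IsDyadicSub Q →
          ∑' R : {R : DyCube n // R.IsDyadicSub Q'},
              ENNReal.ofReal (a (R : DyCube n) ^ δ) * volume (R : DyCube n).set ≤
            ENNReal.ofReal (C * a Q' ^ δ) * volume Q'.set) →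
        ∃ F : ℕ → Set (DyCube n), IsSparseFamily (1 / 2) Q F ∧
          ∀ᵐ x ∂volume, x ∈ Q.set →
            ∑' R : {R : DyCube n // R.IsDyadicSub Q},
                (R : DyCube n).set.indicator (fun _ => ENNReal.ofReal (a (R : DyCube n))) x ≤
              ENNReal.ofReal (c * C ^ (1 / δ)) *
                ∑' k : ℕ, ∑' P : F k,
                  (P : DyCube n).set.indicator (fun _ => ENNReal.ofReal (a (P : DyCube n))) x := by
  refine ⟨2 ^ (1 / δ), by positivity, fun Q a ha C hC hpack => ?_⟩
  have hconst : (ENNReal.ofReal C / ENNReal.ofReal (1 - 1 / 2)) ^ (1 / δ) =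
      ENNReal.ofReal (2 ^ (1 / δ) * C ^ (1 / δ)) := by
    rw [← ENNReal.ofReal_div_of_pos (by norm_num),
      ENNReal.ofReal_rpow_of_pos (by positivity), ← Real.mul_rpow (by norm_num) hC.le]
    ring_nf
  have hrpow (R : DyCube n) : ENNReal.ofReal (a R ^ δ) = ENNReal.ofReal (a R) ^ δ :=
    (ENNReal.ofReal_rpow_of_nonneg (ha R) hδ0.le).symm
  simp only [ENNReal.ofReal_mul hC.le, hrpow] at hpack
  obtain ⟨F, hF, hdom⟩ := stmt5_general hδ0 hδ1 one_half_pos one_half_lt_one Q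
    (fun R => ENNReal.ofReal (a R)) (ENNReal.ofReal C) hpack
  exact ⟨F, hF, .of_forall fun x hx => hconst ▸ hdom x hx⟩
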